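/- Let N ≥ 2. Then for every u ∈ C_c^∞(ℝ^N), (N/2)² · ( ∫_{ℝ^N} |u(x)|² dx )² ≤ ( ∫_{ℝ^N} H⁰(x)² |u(x)|² dx ) · ( ∫_{ℝ^N} |(x/H⁰(x)) · ∇u(x)|² dx ), where the integrand of the last factor is interpreted as 0 at x = 0. -/

import Mathlib

/-!
The radial field `x` has divergence `N`, so integrating by parts against `u ^ 2` gives
`∫ u (x · ∇u) = -(N / 2) ∫ u ^ 2`. Away from the origin the integrand on the left is the product of
`H⁰ u` and `(x / H⁰) · ∇u`, and the Cauchy-Schwarz inequality for these two functions is the claim.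

Both functions must lie in `L²`, as the Bochner integral of a non-integrable function is `0`. Since
`H` dominates a multiple of the Euclidean norm, `H⁰` is finite, and as a supremum of linear
functions it is sublinear, hence continuous. Testing the supremum with `ξ = x` shows that `H⁰` is
positive off the origin, so by compactness of the sphere `H⁰(x) ≥ c |x|` with `c > 0`, and
`x / H⁰(x)` is bounded.
-/

open MeasureTheory Set Filter
open scoped RealInnerProductSpace Topology ENNReal NNReal

noncomputable section

/-- `ℝ^N` as a Euclidean space. -/
abbrev Euc (N : ℕ) := EuclideanSpace ℝ (Fin N)

/-- `H : ℝ^N → ℝ` is a Finsler norm: nonnegative, convex, `C²` away from the origin,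
even and positively one-homogeneous, comparable to the Euclidean norm, and with
positive definite Hessian of `H²` away from the origin. -/
structure IsFinslerNorm {N : ℕ} (H : Euc N → ℝ) : Prop where
  nonneg : ∀ ξ, 0 ≤ H ξ
  convexOn : ConvexOn ℝ Set.univ H
  smooth : ContDiffOn ℝ 2 H {(0 : Euc N)}ᶜ
  homog : ∀ (t : ℝ) (ξ : Euc N), H (t • ξ) = |t| * H ξ
  bounds : ∃ a b : ℝ, 0 < a ∧ a ≤ b ∧ ∀ ξ : Euc N, a * ‖ξ‖ ≤ H ξ ∧ H ξ ≤ b * ‖ξ‖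
  hessPosDef : ∀ ξ : Euc N, ξ ≠ 0 → ∀ v : Euc N, v ≠ 0 →
    0 < iteratedFDeriv ℝ 2 (fun x => (H x) ^ 2) ξ ![v, v]

/-- The polar function `H⁰(x) = sup_{ξ ≠ 0} (ξ·x)/H(ξ)` of a Finsler norm. -/
def polarNorm {N : ℕ} (H : Euc N → ℝ) (x : Euc N) : ℝ :=
  sSup {r : ℝ | ∃ ξ : Euc N, ξ ≠ 0 ∧ r = ⟪ξ, x⟫ / H ξ}

/-- `u ∈ C_c^∞(Ω)`: a smooth function with compact support contained in `Ω`. -/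
def IsTestFun {N : ℕ} (Ω : Set (Euc N)) (u : Euc N → ℝ) : Prop :=
  ContDiff ℝ (⊤ : ℕ∞) u ∧ HasCompactSupport u ∧ tsupport u ⊆ Ω

section CauchySchwarz

variable {α : Type*} [MeasurableSpace α] {μ : Measure α} {f g : α → ℝ}

lemma sq_integral_mul_le (hf : MemLp f 2 μ) (hg : MemLp g 2 μ) :
    (∫ x, f x * g x ∂μ) ^ 2 ≤ (∫ x, f x ^ 2 ∂μ) * ∫ x, g x ^ 2 ∂μ := by
  have inner_toLp : ∀ {φ ψ : α → ℝ} (hφ : MemLp φ 2 μ) (hψ : MemLp ψ 2 μ),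
      ⟪hφ.toLp φ, hψ.toLp ψ⟫ = ∫ x, φ x * ψ x ∂μ := fun hφ hψ ↦ by
    rw [L2.inner_def]
    refine integral_congr_ae ?_
    filter_upwards [hφ.coeFn_toLp, hψ.coeFn_toLp] with x hφx hψx
    simp [hφx, hψx, mul_comm]
  simpa only [inner_toLp, ← sq] using real_inner_mul_inner_self_le (hf.toLp f) (hg.toLp g)

end CauchySchwarz

section IntegrationByParts

variable {E F : Type*} [NormedAddCommGroup E] [NormedSpace ℝ E]
  [MeasurableSpace E] [BorelSpace E] {μ : Measure E} [NormedAddCommGroup F] [NormedSpace ℝ F]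

lemma integrable_clm_smul_fderiv [IsFiniteMeasureOnCompacts μ] {f : E → F}
    (hf : ContDiff ℝ 1 f) (hc : HasCompactSupport f) (φ : E →L[ℝ] ℝ) (v : E) :
    Integrable (fun x ↦ φ x • fderiv ℝ f x v) μ :=
  have : Continuous (fderiv ℝ f) := hf.continuous_fderiv one_ne_zero
  (by fun_prop : Continuous fun x ↦ φ x • fderiv ℝ f x v).integrable_of_hasCompactSupport
    (hc.fderiv_apply (𝕜 := ℝ) v).smul_left

lemma memLp_fderiv_apply_of_norm_le [IsFiniteMeasureOnCompacts μ] {q : ℝ≥0∞} {f : E → F}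
    {X : E → E} {C : ℝ} (hf : ContDiff ℝ 1 f) (hc : HasCompactSupport f)
    (hX : AEStronglyMeasurable X μ) (hC : ∀ᵐ x ∂μ, ‖X x‖ ≤ C) :
    MemLp (fun x ↦ fderiv ℝ f x (X x)) q μ := by
  have hcd : Continuous (fderiv ℝ f) := hf.continuous_fderiv one_ne_zero
  have hmem : MemLp (fderiv ℝ f) q μ := hcd.memLp_of_hasCompactSupport (hc.fderiv (𝕜 := ℝ))
  refine hmem.of_le_mul (c := C) ?_ ?_
  · exact isBoundedBilinearMap_apply.continuous.comp_aestronglyMeasurable (hmem.1.prodMk hX)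
  · filter_upwards [hC] with x hx
    calc ‖fderiv ℝ f x (X x)‖ ≤ ‖fderiv ℝ f x‖ * ‖X x‖ := (fderiv ℝ f x).le_opNorm _
      _ ≤ C * ‖fderiv ℝ f x‖ := by rw [mul_comm]; gcongr

variable [FiniteDimensional ℝ E] [μ.IsAddHaarMeasure]

lemma integral_clm_smul_fderiv {f : E → F} (hf : ContDiff ℝ 1 f) (hc : HasCompactSupport f)
    (φ : E →L[ℝ] ℝ) (v : E) : ∫ x, φ x • fderiv ℝ f x v ∂μ = -(φ v • ∫ x, f x ∂μ) := by
  have hfi : Integrable f μ := hf.continuous.integrable_of_hasCompactSupport hc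
  have hφf : Integrable (fun x ↦ φ x • f x) μ :=
    (φ.continuous.smul hf.continuous).integrable_of_hasCompactSupport hc.smul_left
  rw [integral_smul_fderiv_eq_neg_fderiv_smul_of_integrable
    (by simpa [Pi.smul_def] using hfi.smul (φ v)) (integrable_clm_smul_fderiv hf hc φ v) hφf
    (fun x _ ↦ φ.differentiableAt) (fun x _ ↦ hf.differentiable one_ne_zero x)]
  simp only [ContinuousLinearMap.fderiv, integral_smul]

lemma integral_fderiv_apply_self {f : E → F} (hf : ContDiff ℝ 1 f) (hc : HasCompactSupport f) :
    ∫ x, fderiv ℝ f x x ∂μ = -((Module.finrank ℝ E : ℝ) • ∫ x, f x ∂μ) := by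
  let b := Module.finBasis ℝ E
  let φ i : E →L[ℝ] ℝ := (b.coord i).toContinuousLinearMap
  have hsum : ∀ x, fderiv ℝ f x x = ∑ i, φ i x • fderiv ℝ f x (b i) := fun x ↦ by
    calc fderiv ℝ f x x = fderiv ℝ f x (∑ i, b.repr x i • b i) := by rw [b.sum_repr]
      _ = ∑ i, φ i x • fderiv ℝ f x (b i) := by
        simp only [map_sum, map_smul, φ, LinearMap.coe_toContinuousLinearMap', b.coord_apply]
  simp only [hsum]
  rw [integral_finsetSum _ fun i _ ↦ integrable_clm_smul_fderiv hf hc (φ i) (b i)]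
  simp only [integral_clm_smul_fderiv hf hc]
  simp [φ, Nat.cast_smul_eq_nsmul]

lemma integral_mul_fderiv_apply_self {u : E → ℝ} (hu : ContDiff ℝ 1 u) (hc : HasCompactSupport u) :
    ∫ x, u x * fderiv ℝ u x x ∂μ = -(Module.finrank ℝ E / 2 * ∫ x, u x ^ 2 ∂μ) := by
  have hsq : ∀ x, fderiv ℝ (fun y ↦ u y ^ 2) x x = 2 * (u x * fderiv ℝ u x x) := fun x ↦ by
    simp [fderiv_fun_pow 2 (hu.differentiable one_ne_zero x), mul_assoc]
  have h := integral_fderiv_apply_self (μ := μ) (hu.pow 2) (hc.comp_left (zero_pow two_ne_zero))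
  simp only [hsq, integral_const_mul, smul_eq_mul] at h
  linarith

end IntegrationByParts

section Weight

variable {E : Type*} [NormedAddCommGroup E] [NormedSpace ℝ E] {c : ℝ}

lemma norm_inv_smul_le {r : ℝ} {x : E} (hc : 0 < c) (hr : c * ‖x‖ ≤ r) : ‖r⁻¹ • x‖ ≤ c⁻¹ := by
  have hr₀ : 0 ≤ r := (by positivity : 0 ≤ c * ‖x‖).trans hr
  rw [norm_smul, norm_inv, Real.norm_of_nonneg hr₀, inv_mul_eq_div]
  refine div_le_of_le_mul₀ hr₀ (by positivity) ?_
  rwa [← div_eq_inv_mul, le_div_iff₀' hc]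

variable [FiniteDimensional ℝ E] [MeasurableSpace E] [BorelSpace E] {μ : Measure E}
  [μ.IsAddHaarMeasure]

theorem uncertainty_principle_of_mul_norm_le {p : E → ℝ} (hc : 0 < c) (hp : ∀ x, c * ‖x‖ ≤ p x)
    (hpc : Continuous p) {u : E → ℝ} (hu : ContDiff ℝ 1 u) (hcu : HasCompactSupport u) :
    ((Module.finrank ℝ E : ℝ) / 2) ^ 2 * (∫ x, u x ^ 2 ∂μ) ^ 2
      ≤ (∫ x, (p x * u x) ^ 2 ∂μ) * ∫ x, (fderiv ℝ u x ((p x)⁻¹ • x)) ^ 2 ∂μ := by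
  have hmul : ∀ x, p x * u x * fderiv ℝ u x ((p x)⁻¹ • x) = u x * fderiv ℝ u x x := fun x ↦ by
    rcases eq_or_ne x 0 with rfl | hx
    · simp
    · have hpx : p x ≠ 0 := ((by positivity : 0 < c * ‖x‖).trans_le (hp x)).ne'
      rw [map_smul, smul_eq_mul]
      field_simp
  have hpu : MemLp (fun x ↦ p x * u x) 2 μ :=
    (hpc.mul hu.continuous).memLp_of_hasCompactSupport hcu.mul_left
  have hdu : MemLp (fun x ↦ fderiv ℝ u x ((p x)⁻¹ • x)) 2 μ :=
    memLp_fderiv_apply_of_norm_le hu hcu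
      (hpc.measurable.inv.smul measurable_id).aestronglyMeasurable
      (.of_forall fun x ↦ norm_inv_smul_le hc (hp x))
  calc ((Module.finrank ℝ E : ℝ) / 2) ^ 2 * (∫ x, u x ^ 2 ∂μ) ^ 2
      = (∫ x, p x * u x * fderiv ℝ u x ((p x)⁻¹ • x) ∂μ) ^ 2 := by
        simp only [hmul, integral_mul_fderiv_apply_self hu hcu, neg_sq, mul_pow]
    _ ≤ (∫ x, (p x * u x) ^ 2 ∂μ) * ∫ x, (fderiv ℝ u x ((p x)⁻¹ • x)) ^ 2 ∂μ :=
        sq_integral_mul_le hpu hdu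

end Weight

lemma exists_pos_mul_norm_le_of_homogeneous {E : Type*} [NormedAddCommGroup E] [NormedSpace ℝ E]
    [ProperSpace E] {f : E → ℝ} (hf : Continuous f)
    (hsmul : ∀ t : ℝ, 0 ≤ t → ∀ x, f (t • x) = t * f x) (hpos : ∀ x, x ≠ 0 → 0 < f x) :
    ∃ c, 0 < c ∧ ∀ x, c * ‖x‖ ≤ f x := by
  obtain ⟨c, hc, hcf⟩ := (isCompact_sphere (0 : E) 1).exists_forall_le' hf.continuousOn
    fun x hx ↦ hpos x (ne_zero_of_mem_unit_sphere ⟨x, hx⟩)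
  refine ⟨c, hc, fun x ↦ ?_⟩
  rcases eq_or_ne x 0 with rfl | hx
  · simpa using (hsmul 0 le_rfl 0).ge
  · have hx' : ‖x‖⁻¹ • x ∈ Metric.sphere (0 : E) 1 := by simp [norm_smul, hx]
    calc c * ‖x‖ ≤ f (‖x‖⁻¹ • x) * ‖x‖ := by gcongr; exact hcf _ hx'
      _ = f x := by rw [hsmul _ (by positivity)]; field_simp

lemma inner_div_le_norm_div {E : Type*} [NormedAddCommGroup E] [InnerProductSpace ℝ E] {a r : ℝ}
    {ξ : E} (ha : 0 < a) (hr : a * ‖ξ‖ ≤ r) (x : E) : ⟪ξ, x⟫ / r ≤ ‖x‖ / a := by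
  refine div_le_of_le_mul₀ ((by positivity : 0 ≤ a * ‖ξ‖).trans hr) (by positivity) ?_
  calc ⟪ξ, x⟫ ≤ ‖ξ‖ * ‖x‖ := real_inner_le_norm ξ x
    _ = ‖x‖ / a * (a * ‖ξ‖) := by field_simp
    _ ≤ ‖x‖ / a * r := by gcongr

section Polar

variable {N : ℕ} {H : Euc N → ℝ} {a : ℝ}

lemma inner_div_le_polarNorm (ha : 0 < a) (hH : ∀ ξ, a * ‖ξ‖ ≤ H ξ) {ξ : Euc N} (hξ : ξ ≠ 0)
    (x : Euc N) : ⟪ξ, x⟫ / H ξ ≤ polarNorm H x := by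
  refine le_csSup ⟨‖x‖ / a, ?_⟩ ⟨ξ, hξ, rfl⟩
  rintro r ⟨η, -, rfl⟩
  exact inner_div_le_norm_div ha (hH η) x

lemma polarNorm_le_norm_div (ha : 0 < a) (hH : ∀ ξ, a * ‖ξ‖ ≤ H ξ) (x : Euc N) :
    polarNorm H x ≤ ‖x‖ / a := by
  refine Real.sSup_le ?_ (by positivity)
  rintro r ⟨ξ, -, rfl⟩
  exact inner_div_le_norm_div ha (hH ξ) x

lemma polarNorm_smul_of_nonneg (H : Euc N → ℝ) {t : ℝ} (ht : 0 ≤ t) (x : Euc N) :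
    polarNorm H (t • x) = t * polarNorm H x := by
  rw [polarNorm, polarNorm, ← smul_eq_mul, ← Real.sSup_smul_of_nonneg ht]
  congr 1
  ext r
  simp only [mem_smul_set, mem_ofPred_eq, inner_smul_right, smul_eq_mul]
  constructor
  · rintro ⟨ξ, hξ, rfl⟩
    exact ⟨_, ⟨ξ, hξ, rfl⟩, (mul_div_assoc ..).symm⟩
  · rintro ⟨_, ⟨ξ, hξ, rfl⟩, rfl⟩
    exact ⟨ξ, hξ, (mul_div_assoc ..).symm⟩

lemma polarNorm_pos (ha : 0 < a) (hH : ∀ ξ, a * ‖ξ‖ ≤ H ξ) {x : Euc N} (hx : x ≠ 0) :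
    0 < polarNorm H x := by
  have hHx : 0 < H x := (by positivity : 0 < a * ‖x‖).trans_le (hH x)
  calc 0 < ⟪x, x⟫ / H x := div_pos (real_inner_self_pos.mpr hx) hHx
    _ ≤ polarNorm H x := inner_div_le_polarNorm ha hH hx x

lemma polarNorm_nonneg (ha : 0 < a) (hH : ∀ ξ, a * ‖ξ‖ ≤ H ξ) (x : Euc N) :
    0 ≤ polarNorm H x := by
  rcases eq_or_ne x 0 with rfl | hx
  · simpa using (polarNorm_smul_of_nonneg H le_rfl 0).ge
  · exact (polarNorm_pos ha hH hx).le

lemma polarNorm_add_le (ha : 0 < a) (hH : ∀ ξ, a * ‖ξ‖ ≤ H ξ) (x y : Euc N) :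
    polarNorm H (x + y) ≤ polarNorm H x + polarNorm H y := by
  refine Real.sSup_le ?_ (add_nonneg (polarNorm_nonneg ha hH x) (polarNorm_nonneg ha hH y))
  rintro r ⟨ξ, hξ, rfl⟩
  rw [inner_add_right, add_div]
  exact add_le_add (inner_div_le_polarNorm ha hH hξ x) (inner_div_le_polarNorm ha hH hξ y)

lemma continuous_polarNorm (ha : 0 < a) (hH : ∀ ξ, a * ‖ξ‖ ≤ H ξ) : Continuous (polarNorm H) := by
  refine (LipschitzWith.of_le_add_mul' a⁻¹ fun x y ↦ ?_).continuous
  calc polarNorm H x = polarNorm H (y + (x - y)) := by rw [add_sub_cancel]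
    _ ≤ polarNorm H y + polarNorm H (x - y) := polarNorm_add_le ha hH y (x - y)
    _ ≤ polarNorm H y + a⁻¹ * dist x y := by
      rw [dist_eq_norm, inv_mul_eq_div]; gcongr; exact polarNorm_le_norm_div ha hH (x - y)

end Polar

theorem finsler_uncertainty_principle_polar_general {N : ℕ} {H : Euc N → ℝ} {a : ℝ} (ha : 0 < a)
    (hH : ∀ ξ, a * ‖ξ‖ ≤ H ξ) {u : Euc N → ℝ} (hu : ContDiff ℝ 1 u) (hc : HasCompactSupport u) :
    ((N : ℝ) / 2) ^ 2 * (∫ x, |u x| ^ 2) ^ 2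
      ≤ (∫ x, polarNorm H x ^ 2 * |u x| ^ 2) *
        ∫ x, |⟪(polarNorm H x)⁻¹ • x, gradient u x⟫| ^ 2 := by
  have hcont : Continuous (polarNorm H) := continuous_polarNorm ha hH
  obtain ⟨c, hc₀, hcoercive⟩ := exists_pos_mul_norm_le_of_homogeneous hcont
    (fun _ ht x ↦ polarNorm_smul_of_nonneg H ht x) fun _ hx ↦ polarNorm_pos ha hH hx
  simpa only [finrank_euclideanSpace_fin, mul_pow, sq_abs, inner_gradient_right, conj_trivial]
    using uncertainty_principle_of_mul_norm_le (μ := volume) hc₀ hcoercive hcont hu hc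

/-- Anisotropic uncertainty principle inequality with the weight H⁰(x). -/
theorem finsler_uncertainty_principle_polar
    (N : ℕ) (hN : 2 ≤ N) (H : Euc N → ℝ) (hH : IsFinslerNorm H)
    (u : Euc N → ℝ) (hu : IsTestFun (univ : Set (Euc N)) u) :
    ((N : ℝ) / 2) ^ 2 * (∫ x, |u x| ^ 2) ^ 2
      ≤ (∫ x, polarNorm H x ^ 2 * |u x| ^ 2) *
        ∫ x, |⟪(polarNorm H x)⁻¹ • x, gradient u x⟫| ^ 2 := by
  obtain ⟨a, _, ha, _, hbounds⟩ := hH.bounds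
  exact finsler_uncertainty_principle_polar_general ha (fun ξ ↦ (hbounds ξ).1)
    (hu.1.of_le (by simp)) hu.2.1
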